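/- Let X be a locally compact Hausdorff space, (A, Φ) a C₀(X)-algebra, E a closed two-sided ideal of A, and x ∈ X. Then the closed linear span in A of {Φ(φ)·e : φ ∈ C₀(X), φ(x) = 0, e ∈ E} equals E ∩ J(A, Φ; x). -/

import Mathlib

open MultiplierAlgebra ZeroAtInfty

/-- For `x ∈ X`, `Jideal A Φ x` is the closed linear span in `A` of
`{Φ(φ)·a : φ ∈ C₀(X), φ(x) = 0, a ∈ A}`. -/
def Jideal {X : Type*} [TopologicalSpace X] (A : Type*) [NonUnitalCStarAlgebra A]
    (Φ : C₀(X, ℂ) →⋆ₙₐ[ℂ] 𝓜(ℂ, A)) (x : X) : Set A :=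
  closure (Submodule.span ℂ
    {a : A | ∃ φ : C₀(X, ℂ), φ x = 0 ∧ ∃ b : A, a = (Φ φ).fst b} : Set A)

/-!
Every element `a` of a C⋆-algebra is approximately regular: `a` is a limit of elements `a * b * a`.
Functional calculus on `h = a * star a` provides selfadjoint contractions `v = h * w` with
`v * h → h`, and the C⋆-identity turns this into `v * a → a`.

Since `a * b` stays in any ideal that contains `a`, it follows that multipliers preserve closed
ideals `E`, and that each point of `E ∩ closure S` is a limit of products `v * s` with `v ∈ E`,
`s ∈ S`. For a central multiplier `m` we have `v * m a = m (v * a)`, so the factor `v ∈ E` can be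
moved inside.
-/

open scoped Pointwise

section ApproximateRegularity

lemma norm_sub_mul_self_sq_le {A : Type*} [NonUnitalNormedRing A] [StarRing A] [CStarRing A]
    (a : A) {v : A} (hv : IsSelfAdjoint v) :
    ‖a - v * a‖ ^ 2 ≤ ‖a * star a - v * (a * star a)‖ * (1 + ‖v‖) := by
  have expand : (a - v * a) * star (a - v * a) =
      (a * star a - v * (a * star a)) - (a * star a - v * (a * star a)) * v := by
    rw [star_sub, star_mul, hv.star_eq]
    noncomm_ring
  generalize a * star a - v * (a * star a) = r at expand ⊢
  calc ‖a - v * a‖ ^ 2 = ‖r - r * v‖ := by rw [sq, ← CStarRing.norm_self_mul_star, expand]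
    _ ≤ ‖r‖ + ‖r‖ * ‖v‖ := (norm_sub_le _ _).trans (by gcongr; exact norm_mul_le _ _)
    _ = ‖r‖ * (1 + ‖v‖) := by ring

variable {A : Type*} [NonUnitalCStarAlgebra A]

lemma exists_norm_sub_mul_mul_self_le {h : A} (hh : IsSelfAdjoint h) {δ : ℝ} (hδ : 0 < δ) :
    ∃ w : A, IsSelfAdjoint (h * w) ∧ ‖h * w‖ ≤ 1 ∧ ‖h - h * w * h‖ ≤ δ := by
  let g : ℝ → ℝ := fun t ↦ t / (t ^ 2 + δ ^ 2)
  have denom_pos (t : ℝ) : 0 < t ^ 2 + δ ^ 2 := by positivity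
  have hg : Continuous g :=
    Continuous.div (by fun_prop) (by fun_prop) fun t ↦ (denom_pos t).ne'
  have mul_eq : h * cfcₙ g h = cfcₙ (fun t ↦ t * g t) h := by
    rw [cfcₙ_mul (fun t ↦ t) g h, cfcₙ_id' ℝ h]
  have sub_eq : h - h * cfcₙ g h * h = cfcₙ (fun t ↦ t - t * g t * t) h := by
    rw [cfcₙ_sub (fun t ↦ t) (fun t ↦ t * g t * t) h, cfcₙ_mul (fun t ↦ t * g t) (fun t ↦ t) h,
      cfcₙ_id' ℝ h, mul_eq]
  refine ⟨cfcₙ g h, mul_eq ▸ cfcₙ_predicate _ h, mul_eq ▸ norm_cfcₙ_le fun t _ ↦ ?_,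
    sub_eq ▸ norm_cfcₙ_le fun t _ ↦ ?_⟩
  · have : t * g t = t ^ 2 / (t ^ 2 + δ ^ 2) := by ring
    rw [this, Real.norm_of_nonneg (by positivity), div_le_one (denom_pos t)]
    exact le_add_of_nonneg_right (sq_nonneg δ)
  · have : t - t * g t * t = t * δ ^ 2 / (t ^ 2 + δ ^ 2) := by
      have := (denom_pos t).ne'
      simp only [g]
      field_simp
      ring
    have am_gm : |t| * δ ≤ t ^ 2 + δ ^ 2 := by
      nlinarith [two_mul_le_add_sq |t| δ, sq_abs t, mul_nonneg (abs_nonneg t) hδ.le]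
    rw [this, Real.norm_eq_abs, abs_div, abs_mul, abs_of_pos (denom_pos t),
      abs_of_pos (pow_pos hδ 2), div_le_iff₀ (denom_pos t)]
    calc |t| * δ ^ 2 = δ * (|t| * δ) := by ring
      _ ≤ δ * (t ^ 2 + δ ^ 2) := by gcongr

lemma mem_closure_range_mul_mul_self (a : A) : a ∈ closure (Set.range fun b ↦ a * b * a) := by
  refine Metric.mem_closure_range_iff.mpr fun ε hε ↦ ?_
  obtain ⟨w, hv, hv_norm, hvh⟩ := exists_norm_sub_mul_mul_self_le
    (IsSelfAdjoint.mul_star_self a) (δ := ε ^ 2 / 4) (by positivity)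
  refine ⟨star a * w, ?_⟩
  rw [dist_eq_norm, ← mul_assoc]
  refine lt_of_pow_lt_pow_left₀ 2 hε.le ?_
  calc ‖a - a * star a * w * a‖ ^ 2 ≤ ε ^ 2 / 4 * (1 + 1) :=
        (norm_sub_mul_self_sq_le a hv).trans (by gcongr)
    _ < ε ^ 2 := by linarith [pow_pos hε 2]

end ApproximateRegularity

section Multipliers

variable {𝕜 A : Type*} [NontriviallyNormedField 𝕜] [NonUnitalNormedRing A] [NormedSpace 𝕜 A]
  [SMulCommClass 𝕜 A A] [IsScalarTower 𝕜 A A]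

lemma multiplier_fst_mul [StarRing A] [CStarRing A] (m : 𝓜(𝕜, A)) (a b : A) :
    m.fst (a * b) = m.fst a * b := by
  have left_mul (z : A) : z * (m.fst (a * b) - m.fst a * b) = 0 := by
    rw [mul_sub, ← m.central, ← mul_assoc, ← mul_assoc, m.central, sub_self]
  exact sub_eq_zero.mp ((CStarRing.star_mul_self_eq_zero_iff _).mp (left_mul _))

lemma multiplier_fst_mul_of_mem_center {m : 𝓜(𝕜, A)} (hm : m ∈ Set.center 𝓜(𝕜, A)) (a b : A) :
    m.fst (a * b) = a * m.fst b := by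
  simpa using congrArg (fun n : 𝓜(𝕜, A) ↦ n.fst b) (hm.comm (a : 𝓜(𝕜, A)))

lemma ideal_mul_span_multiplier_subset (I : TwoSidedIdeal A) {M : Set 𝓜(𝕜, A)}
    (hM : M ⊆ Set.center 𝓜(𝕜, A)) :
    (I : Set A) * (Submodule.span 𝕜 {a : A | ∃ m ∈ M, ∃ b : A, a = m.fst b} : Set A) ⊆
      Submodule.span 𝕜 {a : A | ∃ m ∈ M, ∃ e ∈ I, a = m.fst e} := by
  rintro _ ⟨v, hv, y, hy, rfl⟩
  suffices span_le : Submodule.span 𝕜 {a : A | ∃ m ∈ M, ∃ b : A, a = m.fst b} ≤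
      (Submodule.span 𝕜 {a : A | ∃ m ∈ M, ∃ e ∈ I, a = m.fst e}).comap (LinearMap.mulLeft 𝕜 v)
    from span_le hy
  refine Submodule.span_le.mpr ?_
  rintro _ ⟨m, hm, b, rfl⟩
  exact Submodule.subset_span ⟨m, hm, v * b, I.mul_mem_right _ _ hv,
    (multiplier_fst_mul_of_mem_center (hM hm) v b).symm⟩

end Multipliers

section ClosedIdeals

variable {A : Type*} [NonUnitalCStarAlgebra A] (E : TwoSidedIdeal A)

lemma inter_closure_subset_closure_mul (S : Set A) :
    (E : Set A) ∩ closure S ⊆ closure ((E : Set A) * S) := by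
  rintro a ⟨haE, haS⟩
  refine closure_minimal ?_ isClosed_closure (mem_closure_range_mul_mul_self a)
  rintro _ ⟨b, rfl⟩
  exact map_mem_closure (f := fun y ↦ a * b * y) (by fun_prop) haS
    fun s hs ↦ Set.mul_mem_mul (E.mul_mem_right _ _ haE) hs

variable {E}

lemma multiplier_fst_mem (hE : IsClosed (E : Set A)) (m : 𝓜(ℂ, A)) {e : A} (he : e ∈ E) :
    m.fst e ∈ E := by
  refine hE.closure_subset (map_mem_closure m.fst.continuous (mem_closure_range_mul_mul_self e) ?_)
  rintro _ ⟨b, rfl⟩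
  rw [multiplier_fst_mul]
  exact E.mul_mem_left _ _ he

lemma closure_span_subset_of_isClosed (hE : IsClosed (E : Set A)) {s : Set A} (hs : s ⊆ E) :
    closure (Submodule.span ℂ s : Set A) ⊆ E := by
  refine closure_minimal (fun a ha ↦ ?_) hE
  induction ha using Submodule.span_induction with
  | mem a ha => exact hs ha
  | zero => exact E.zero_mem
  | add a b _ _ ha hb => exact E.add_mem ha hb
  -- A `TwoSidedIdeal` of a non-unital ring need not absorb scalars, but scalars are multipliers.
  | smul c a _ ha => simpa using multiplier_fst_mem hE (algebraMap ℂ 𝓜(ℂ, A) c) ha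

end ClosedIdeals

theorem stmt4_general {A : Type*} [NonUnitalCStarAlgebra A] {M : Set 𝓜(ℂ, A)}
    (hM : M ⊆ Set.center 𝓜(ℂ, A)) (E : TwoSidedIdeal A) (hE : IsClosed (E : Set A)) :
    closure (Submodule.span ℂ {a : A | ∃ m ∈ M, ∃ e ∈ E, a = m.fst e} : Set A) =
      (E : Set A) ∩
        closure (Submodule.span ℂ {a : A | ∃ m ∈ M, ∃ b : A, a = m.fst b} : Set A) := by
  refine (Set.subset_inter ?_ ?_).antisymm ?_
  · refine closure_span_subset_of_isClosed hE ?_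
    rintro _ ⟨m, -, e, he, rfl⟩
    exact multiplier_fst_mem hE m he
  · refine closure_mono (Submodule.span_mono ?_)
    rintro _ ⟨m, hm, e, -, rfl⟩
    exact ⟨m, hm, e, rfl⟩
  · exact (inter_closure_subset_closure_mul E _).trans
      (closure_mono (ideal_mul_span_multiplier_subset E hM))

/-- Let `X` be a locally compact Hausdorff space, `(A, Φ)` a `C₀(X)`-algebra,
`E` a closed two-sided ideal of `A`, and `x ∈ X`.  Then the closed linear span in `A` of
`{Φ(φ)·e : φ ∈ C₀(X), φ(x) = 0, e ∈ E}` equals `E ∩ J(A, Φ; x)`. -/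
theorem stmt4 {X : Type*} [TopologicalSpace X] [LocallyCompactSpace X] [T2Space X]
    {A : Type*} [NonUnitalCStarAlgebra A]
    (Φ : C₀(X, ℂ) →⋆ₙₐ[ℂ] 𝓜(ℂ, A))
    (hΦ_central : ∀ φ : C₀(X, ℂ), Φ φ ∈ Set.center 𝓜(ℂ, A))
    (hΦ_nondeg : closure (Submodule.span ℂ
      {a : A | ∃ (φ : C₀(X, ℂ)) (b : A), a = (Φ φ).fst b} : Set A) = Set.univ)
    (E : TwoSidedIdeal A) (hE_closed : IsClosed (E : Set A)) (x : X) :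
    closure (Submodule.span ℂ
      {a : A | ∃ φ : C₀(X, ℂ), φ x = 0 ∧ ∃ e : A, e ∈ E ∧ a = (Φ φ).fst e} : Set A) =
      (E : Set A) ∩ Jideal A Φ x := by
  simpa [Jideal] using stmt4_general (M := Φ '' {φ | φ x = 0})
    (Set.image_subset_iff.mpr fun φ _ ↦ hΦ_central φ) E hE_closed
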